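/- Under the hypotheses of the policy-transfer setting with greedy action mapping g (finite MDPs M₁, M₂ with GBSM d^{1-2}; deterministic policy π on M₁; f : S₂ → S₁; g satisfying δ(d^{1-2})((f(s'),a),(s',g(a))) = min_{a'∈A₂} δ(d^{1-2})((f(s'),a),(s',a')) for all s', a; V₂*, V₂^π, V₁*, V₁^π satisfying their Bellman equations), suppose additionally that f is chosen optimally: d^{1-2}(f(s'),s') = min_{s∈S₁} d^{1-2}(s,s') for all s' ∈ S₂. Then max_{s'∈S₂} |V₂*(s') − V₂^π(s')| ≤ (2/(1−γ))·max_{s'∈S₂} { min_{s∈S₁} d^{1-2}(s,s') } + ((1+γ)/(1−γ))·max_{s∈S₁} |V₁*(s) − V₁^π(s)|. -/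

import Mathlib

open scoped BigOperators

noncomputable section

/-- The (finite, linear-programming) 1-Wasserstein distance between probability
vectors `P` on `S₁` and `Q` on `S₂` with cost function `d`. -/
def W1 {S₁ S₂ : Type*} [Fintype S₁] [Fintype S₂]
    (P : S₁ → ℝ) (Q : S₂ → ℝ) (d : S₁ → S₂ → ℝ) : ℝ :=
  sInf { c : ℝ | ∃ lam : S₁ → S₂ → ℝ,
    (∀ i j, 0 ≤ lam i j) ∧ (∀ i, ∑ j, lam i j = P i) ∧
    (∀ j, ∑ i, lam i j = Q j) ∧ c = ∑ i, ∑ j, lam i j * d i j }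

/-- A finite Markov decision process (without its discount factor). -/
structure FinMDP (S A : Type*) [Fintype S] [Fintype A] where
  P : S → A → S → ℝ
  R : S → A → ℝ
  P_nonneg : ∀ s a s', 0 ≤ P s a s'
  P_sum : ∀ s a, ∑ s', P s a s' = 1

variable {S₁ A₁ S₂ A₂ : Type*} [Fintype S₁] [Fintype A₁] [Fintype S₂] [Fintype A₂]

/-- `δ(d)((s,a),(s',a')) = |R₁(s,a) − R₂(s',a')| + γ·W₁(P₁(·|s,a), P₂(·|s',a'); d)` -/
def gbsmDelta (M₁ : FinMDP S₁ A₁) (M₂ : FinMDP S₂ A₂) (γ : ℝ)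
    (d : S₁ → S₂ → ℝ) (s : S₁) (a : A₁) (s' : S₂) (a' : A₂) : ℝ :=
  |M₁.R s a - M₂.R s' a'| + γ * W1 (M₁.P s a) (M₂.P s' a') d

/-- The GBSM operator `F(d)(s,s') = H(X_s, X_{s'}; δ(d))` where `H` is the Hausdorff
metric between the finite sets `X_s = {(s,a)}`, `X_{s'} = {(s',a')}`. -/
def gbsmF (M₁ : FinMDP S₁ A₁) (M₂ : FinMDP S₂ A₂) (γ : ℝ)
    (d : S₁ → S₂ → ℝ) : S₁ → S₂ → ℝ :=
  fun s s' =>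
    max (⨆ a : A₁, ⨅ a' : A₂, gbsmDelta M₁ M₂ γ d s a s' a')
        (⨅ a : A₁, ⨆ a' : A₂, gbsmDelta M₁ M₂ γ d s a s' a')

/-- The GBSM: pointwise supremum of the iterates of `gbsmF` from the zero function. -/
def gbsm (M₁ : FinMDP S₁ A₁) (M₂ : FinMDP S₂ A₂) (γ : ℝ) : S₁ → S₂ → ℝ :=
  fun s s' => ⨆ n : ℕ, (gbsmF M₁ M₂ γ)^[n] (fun _ _ => 0) s s'


variable [Nonempty S₁] [Nonempty A₁] [Nonempty S₂] [Nonempty A₂]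

/-!
By Blackwell's conditions the operator `gbsmF` is a monotone `γ`-contraction for the supremum
metric, so the iterates defining `gbsm` increase to its unique fixed point, and every `d` with
`d ≤ gbsmF d` lies below that fixed point. The difference of optimal values is such a `d`: optimal
values are suprema of action values, and action values differ by at most `gbsmDelta`. Hence
`|V₁* s - V₂* t| ≤ gbsm s t`.

For the regret it remains to bound the one-step loss of the transferred policy with respect to
`V₂*`. Passing from `V₂* t` to `V₁* (f t)` costs at most `gbsm (f t) t`, playing `π` instead of an
optimal action at `f t` costs at most `(1 + γ) max |V₁* - V₁^π|`, and passing back to the action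
value of the greedy action at `t` costs at most `gbsm (f t) t` again. The losses accumulate to a
factor `1 / (1 - γ)`.
-/

open Set
open scoped NNReal

section Hausdorff

variable {A B : Type*}

/-- The paper's Hausdorff distance `H` between two finite index sets for a cost matrix `c`. Its
second term is `min_a max_b`, not the `max_b min_a` of the usual symmetric definition. -/
def hausdorffCost (c : A → B → ℝ) : ℝ :=
  max (⨆ a, ⨅ b, c a b) (⨅ a, ⨆ b, c a b)

theorem hausdorffCost_nonneg {c : A → B → ℝ} (hc : ∀ a b, 0 ≤ c a b) : 0 ≤ hausdorffCost c :=
  (Real.iSup_nonneg fun a => Real.iInf_nonneg (hc a)).trans (le_max_left _ _)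

theorem iInf_le_hausdorffCost [Finite A] (c : A → B → ℝ) (a : A) :
    ⨅ b, c a b ≤ hausdorffCost c :=
  (le_ciSup (f := fun a => ⨅ b, c a b) (finite_range _).bddAbove a).trans (le_max_left _ _)

variable [Finite A] [Finite B]

theorem hausdorffCost_mono : Monotone (hausdorffCost : (A → B → ℝ) → ℝ) := fun _ _ h =>
  max_le_max
    (ciSup_mono (finite_range _).bddAbove fun a =>
      ciInf_mono (finite_range _).bddBelow fun b => h a b)
    (ciInf_mono (finite_range _).bddBelow fun a =>
      ciSup_mono (finite_range _).bddAbove fun b => h a b)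

theorem exists_forall_le_hausdorffCost [Nonempty A] (c : A → B → ℝ) :
    ∃ a, ∀ b, c a b ≤ hausdorffCost c := by
  obtain ⟨a, ha⟩ := exists_eq_ciInf_of_finite (f := fun a => ⨆ b, c a b)
  exact ⟨a, fun b => (le_ciSup (finite_range _).bddAbove b).trans (ha.trans_le (le_max_right _ _))⟩

variable [Nonempty A] [Nonempty B]

theorem hausdorffCost_add_const (c : A → B → ℝ) (e : ℝ) :
    hausdorffCost (fun a b => c a b + e) = hausdorffCost c + e := by
  simp only [hausdorffCost, ← ciSup_add (finite_range _).bddAbove,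
    ← ciInf_add (finite_range _).bddBelow, max_add_add_right]

theorem abs_iSup_sub_iSup_le_hausdorffCost {x : A → ℝ} {y : B → ℝ} {c : A → B → ℝ}
    (h : ∀ a b, |x a - y b| ≤ c a b) : |(⨆ a, x a) - ⨆ b, y b| ≤ hausdorffCost c := by
  refine abs_sub_le_iff.2 ⟨sub_le_iff_le_add.2 (ciSup_le fun a => ?_),
    sub_le_iff_le_add.2 (ciSup_le fun b => ?_)⟩
  · obtain ⟨b, hb⟩ := exists_eq_ciInf_of_finite (f := c a)
    have hc : c a b ≤ hausdorffCost c := hb.trans_le (iInf_le_hausdorffCost c a)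
    have hy : y b ≤ ⨆ b, y b := le_ciSup (finite_range y).bddAbove b
    linarith [(abs_sub_le_iff.1 (h a b)).1]
  · obtain ⟨a, ha⟩ := exists_forall_le_hausdorffCost c
    have hx : x a ≤ ⨆ a, x a := le_ciSup (finite_range x).bddAbove a
    linarith [ha b, (abs_sub_le_iff.1 (h a b)).2]

end Hausdorff

section Wasserstein

variable {S T : Type*} [Fintype S] [Fintype T] {P : S → ℝ} {Q : T → ℝ} {lam : S → T → ℝ}

/-- The couplings of the weight vectors `P` and `Q`, the feasible set of the linear program
defining `W1`. -/
def couplings (P : S → ℝ) (Q : T → ℝ) : Set (S → T → ℝ) :=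
  {lam | (∀ i j, 0 ≤ lam i j) ∧ (∀ i, ∑ j, lam i j = P i) ∧ ∀ j, ∑ i, lam i j = Q j}

/-- The cost of the transport plan `lam` for the cost function `d`. -/
def transportCost (lam d : S → T → ℝ) : ℝ :=
  ∑ i, ∑ j, lam i j * d i j

theorem couplings_nonempty (hP : P ∈ stdSimplex ℝ S) (hQ : Q ∈ stdSimplex ℝ T) :
    (couplings P Q).Nonempty := by
  refine ⟨fun i j => P i * Q j, fun i j => mul_nonneg (hP.1 i) (hQ.1 j), fun i => ?_, fun j => ?_⟩
  · rw [← Finset.mul_sum, hQ.2, mul_one]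
  · rw [← Finset.sum_mul, hP.2, one_mul]

theorem transportCost_mono (hlam : ∀ i j, 0 ≤ lam i j) : Monotone (transportCost lam) :=
  fun _ _ h => Finset.sum_le_sum fun i _ => Finset.sum_le_sum fun j _ =>
    mul_le_mul_of_nonneg_left (h i j) (hlam i j)

theorem transportCost_sub (hlam : lam ∈ couplings P Q) (u : S → ℝ) (v : T → ℝ) :
    transportCost lam (fun i j => u i - v j) = ∑ i, P i * u i - ∑ j, Q j * v j := by
  simp only [transportCost, mul_sub, Finset.sum_sub_distrib, ← Finset.sum_mul, hlam.2.1]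
  rw [Finset.sum_comm]
  simp only [← Finset.sum_mul, hlam.2.2]

theorem transportCost_add_const (hP : P ∈ stdSimplex ℝ S) (hlam : lam ∈ couplings P Q)
    (d : S → T → ℝ) (e : ℝ) :
    transportCost lam (fun i j => d i j + e) = transportCost lam d + e := by
  simp only [transportCost, mul_add, Finset.sum_add_distrib, ← Finset.sum_mul, hlam.2.1, hP.2,
    one_mul]

theorem abs_transportCost_le (hlam : ∀ i j, 0 ≤ lam i j) (d : S → T → ℝ) :
    |transportCost lam d| ≤ transportCost lam fun i j => |d i j| :=
  calc |transportCost lam d| ≤ ∑ i, ∑ j, |lam i j * d i j| :=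
        (Finset.abs_sum_le_sum_abs _ _).trans
          (Finset.sum_le_sum fun _ _ => Finset.abs_sum_le_sum_abs _ _)
    _ = transportCost lam fun i j => |d i j| := by
        simp only [transportCost, abs_mul, abs_of_nonneg (hlam _ _)]

theorem W1_eq_iInf (P : S → ℝ) (Q : T → ℝ) (d : S → T → ℝ) :
    W1 P Q d = ⨅ lam : couplings P Q, transportCost lam.1 d := by
  refine congrArg sInf (Set.ext fun c => ⟨?_, ?_⟩)
  · rintro ⟨lam, hnonneg, hfst, hsnd, rfl⟩
    exact ⟨⟨lam, hnonneg, hfst, hsnd⟩, rfl⟩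
  · rintro ⟨⟨lam, hnonneg, hfst, hsnd⟩, rfl⟩
    exact ⟨lam, hnonneg, hfst, hsnd, rfl⟩

theorem bddBelow_range_transportCost (P : S → ℝ) (Q : T → ℝ) (d : S → T → ℝ) :
    BddBelow (range fun lam : couplings P Q => transportCost lam.1 d) := by
  obtain ⟨m, hm⟩ := Finite.bddBelow_range fun p : S × T => d p.1 p.2
  refine ⟨(∑ i, P i) * m, ?_⟩
  rintro _ ⟨lam, rfl⟩
  calc (∑ i, P i) * m = transportCost lam.1 fun _ _ => m := by
        simp only [transportCost, ← Finset.sum_mul, lam.2.2.1]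
    _ ≤ transportCost lam.1 d :=
        transportCost_mono lam.2.1 fun i j => hm (mem_range_self (i, j))

theorem W1_nonneg {d : S → T → ℝ} (hd : 0 ≤ d) : 0 ≤ W1 P Q d := by
  rw [W1_eq_iInf]
  exact Real.iInf_nonneg fun lam => Finset.sum_nonneg fun i _ => Finset.sum_nonneg fun j _ =>
    mul_nonneg (lam.2.1 i j) (hd i j)

theorem W1_mono (hP : P ∈ stdSimplex ℝ S) (hQ : Q ∈ stdSimplex ℝ T) : Monotone (W1 P Q) := by
  intro d d' h
  have : Nonempty (couplings P Q) := (couplings_nonempty hP hQ).to_subtype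
  simp only [W1_eq_iInf]
  exact ciInf_mono (bddBelow_range_transportCost P Q d) fun lam => transportCost_mono lam.2.1 h

theorem W1_add_const (hP : P ∈ stdSimplex ℝ S) (hQ : Q ∈ stdSimplex ℝ T) (d : S → T → ℝ) (e : ℝ) :
    W1 P Q (fun i j => d i j + e) = W1 P Q d + e := by
  have : Nonempty (couplings P Q) := (couplings_nonempty hP hQ).to_subtype
  simp only [W1_eq_iInf, transportCost_add_const hP (Subtype.prop _)]
  exact (ciInf_add (bddBelow_range_transportCost P Q d) e).symm

theorem abs_sum_mul_sub_sum_mul_le_W1 (hP : P ∈ stdSimplex ℝ S) (hQ : Q ∈ stdSimplex ℝ T)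
    {u : S → ℝ} {v : T → ℝ} {d : S → T → ℝ} (h : ∀ i j, |u i - v j| ≤ d i j) :
    |∑ i, P i * u i - ∑ j, Q j * v j| ≤ W1 P Q d := by
  have : Nonempty (couplings P Q) := (couplings_nonempty hP hQ).to_subtype
  rw [W1_eq_iInf]
  refine le_ciInf fun lam => ?_
  rw [← transportCost_sub lam.2]
  exact (abs_transportCost_le lam.2.1 _).trans (transportCost_mono lam.2.1 h)

end Wasserstein

theorem contractingWith_of_monotone_of_add_const {S T : Type*} [Fintype S] [Fintype T]
    {F : (S → T → ℝ) → S → T → ℝ} {γ : ℝ≥0} (hγ1 : γ < 1) (hmono : Monotone F)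
    (hadd : ∀ (d : S → T → ℝ) (e : ℝ), F (fun s t => d s t + e) = fun s t => F d s t + γ * e) :
    ContractingWith γ F := by
  have hle (d d' : S → T → ℝ) (s : S) (t : T) : F d s t - F d' s t ≤ γ * dist d d' := by
    have hd : d ≤ fun s t => d' s t + dist d d' := fun s t => by
      have hst : dist (d s t) (d' s t) ≤ dist d d' :=
        (dist_le_pi_dist (d s) (d' s) t).trans (dist_le_pi_dist d d' s)
      linarith [le_abs_self (d s t - d' s t), Real.dist_eq (d s t) (d' s t)]
    have hF : F d s t ≤ F d' s t + γ * dist d d' := by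
      simpa only [hadd] using hmono hd s t
    linarith
  refine ⟨hγ1, LipschitzWith.of_dist_le_mul fun d d' => ?_⟩
  have hnonneg : 0 ≤ γ * dist d d' := by positivity
  refine (dist_pi_le_iff hnonneg).2 fun s => (dist_pi_le_iff hnonneg).2 fun t => ?_
  exact abs_sub_le_iff.2 ⟨hle d d' s t, dist_comm d d' ▸ hle d' d s t⟩

theorem isLUB_range_iterate_of_contractingWith {X : Type*} [MetricSpace X] [CompleteSpace X]
    [Nonempty X] [Preorder X] [OrderClosedTopology X] {K : ℝ≥0} {F : X → X} {x : X}
    (hF : ContractingWith K F) (hmono : Monotone F) (hx : x ≤ F x) :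
    IsLUB (range fun n => F^[n] x) (hF.fixedPoint F) :=
  isLUB_of_tendsto_atTop (hmono.monotone_iterate_of_le_map hx) (hF.tendsto_iterate_fixedPoint x)

section GBSM

variable {S T A B : Type*} [Fintype S] [Fintype T] [Fintype A] [Fintype B]

theorem FinMDP.P_mem_stdSimplex (M : FinMDP S A) (s : S) (a : A) : M.P s a ∈ stdSimplex ℝ S :=
  ⟨M.P_nonneg s a, M.P_sum s a⟩

variable (M₁ : FinMDP S A) (M₂ : FinMDP T B) {γ : ℝ}

theorem gbsmDelta_mono (hγ0 : 0 ≤ γ) (s : S) (a : A) (t : T) (b : B) :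
    Monotone fun d => gbsmDelta M₁ M₂ γ d s a t b := fun _ _ h =>
  add_le_add_right (mul_le_mul_of_nonneg_left
    (W1_mono (M₁.P_mem_stdSimplex s a) (M₂.P_mem_stdSimplex t b) h) hγ0) _

theorem gbsmDelta_add_const (d : S → T → ℝ) (e : ℝ) (s : S) (a : A) (t : T) (b : B) :
    gbsmDelta M₁ M₂ γ (fun s t => d s t + e) s a t b = gbsmDelta M₁ M₂ γ d s a t b + γ * e := by
  rw [gbsmDelta, W1_add_const (M₁.P_mem_stdSimplex s a) (M₂.P_mem_stdSimplex t b), mul_add,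
    ← add_assoc, gbsmDelta]

theorem gbsmF_eq_hausdorffCost (γ : ℝ) (d : S → T → ℝ) (s : S) (t : T) :
    gbsmF M₁ M₂ γ d s t = hausdorffCost fun a b => gbsmDelta M₁ M₂ γ d s a t b :=
  rfl

theorem gbsmF_nonneg (hγ0 : 0 ≤ γ) {d : S → T → ℝ} (hd : 0 ≤ d) : 0 ≤ gbsmF M₁ M₂ γ d :=
  fun _ _ => hausdorffCost_nonneg fun _ _ =>
    add_nonneg (abs_nonneg _) (mul_nonneg hγ0 (W1_nonneg hd))

theorem gbsmF_mono (hγ0 : 0 ≤ γ) : Monotone (gbsmF M₁ M₂ γ) := fun _ _ h s t =>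
  hausdorffCost_mono fun a b => gbsmDelta_mono M₁ M₂ hγ0 s a t b h

variable [Nonempty A] [Nonempty B]

theorem gbsmF_add_const (d : S → T → ℝ) (e : ℝ) :
    gbsmF M₁ M₂ γ (fun s t => d s t + e) = fun s t => gbsmF M₁ M₂ γ d s t + γ * e := by
  funext s t
  simp only [gbsmF_eq_hausdorffCost, gbsmDelta_add_const, hausdorffCost_add_const]

theorem contractingWith_gbsmF {γ : ℝ≥0} (hγ1 : γ < 1) : ContractingWith γ (gbsmF M₁ M₂ γ) :=
  contractingWith_of_monotone_of_add_const hγ1 (gbsmF_mono M₁ M₂ γ.coe_nonneg)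
    (gbsmF_add_const M₁ M₂)

theorem gbsm_eq_fixedPoint {γ : ℝ≥0} (hγ1 : γ < 1) :
    gbsm M₁ M₂ γ = (contractingWith_gbsmF M₁ M₂ hγ1).fixedPoint (gbsmF M₁ M₂ γ) := by
  have hlub := isLUB_range_iterate_of_contractingWith (contractingWith_gbsmF M₁ M₂ hγ1)
    (gbsmF_mono M₁ M₂ γ.coe_nonneg) (gbsmF_nonneg M₁ M₂ γ.coe_nonneg le_rfl)
  funext s t
  have hst := isLUB_pi.1 (isLUB_pi.1 hlub s) t
  rw [← range_comp, ← range_comp] at hst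
  exact hst.csSup_eq (range_nonempty _)

theorem gbsmF_gbsm (hγ0 : 0 ≤ γ) (hγ1 : γ < 1) :
    gbsmF M₁ M₂ γ (gbsm M₁ M₂ γ) = gbsm M₁ M₂ γ := by
  lift γ to ℝ≥0 using hγ0
  rw [gbsm_eq_fixedPoint M₁ M₂ hγ1]
  exact (contractingWith_gbsmF M₁ M₂ hγ1).fixedPoint_isFixedPt

variable {M₁ M₂}

theorem le_gbsm_of_le_gbsmF (hγ0 : 0 ≤ γ) (hγ1 : γ < 1) {d : S → T → ℝ}
    (hd : d ≤ gbsmF M₁ M₂ γ d) : d ≤ gbsm M₁ M₂ γ := by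
  lift γ to ℝ≥0 using hγ0
  rw [gbsm_eq_fixedPoint M₁ M₂ hγ1]
  exact (isLUB_range_iterate_of_contractingWith (contractingWith_gbsmF M₁ M₂ hγ1)
    (gbsmF_mono M₁ M₂ γ.coe_nonneg) hd).1 ⟨0, rfl⟩

theorem iInf_gbsmDelta_gbsm_le (hγ0 : 0 ≤ γ) (hγ1 : γ < 1) (s : S) (a : A) (t : T) :
    ⨅ b, gbsmDelta M₁ M₂ γ (gbsm M₁ M₂ γ) s a t b ≤ gbsm M₁ M₂ γ s t :=
  (iInf_le_hausdorffCost (gbsmDelta M₁ M₂ γ (gbsm M₁ M₂ γ) s · t) a).trans_eq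
    (congrFun₂ (gbsmF_gbsm M₁ M₂ hγ0 hγ1) s t)

end GBSM

section Values

variable {S T A B : Type*} [Fintype S] [Fintype T] [Fintype A] [Fintype B]

/-- The action value `R(s,a) + γ · ∑ t, P(t|s,a) · V t`: the return of playing `a` at `s` when the
continuation is worth `V`. -/
def FinMDP.qValue (M : FinMDP S A) (γ : ℝ) (V : S → ℝ) (s : S) (a : A) : ℝ :=
  M.R s a + γ * ∑ t, M.P s a t * V t

/-- The Bellman optimality equation for `V`. -/
def FinMDP.IsOptimalValue (M : FinMDP S A) (γ : ℝ) (V : S → ℝ) : Prop :=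
  ∀ s, V s = ⨆ a, M.qValue γ V s a

/-- The Bellman equation for `V` as the value of the deterministic policy `π`. -/
def FinMDP.IsPolicyValue (M : FinMDP S A) (γ : ℝ) (π : S → A) (V : S → ℝ) : Prop :=
  ∀ s, V s = M.qValue γ V s (π s)

variable {γ : ℝ}

theorem FinMDP.abs_qValue_sub_qValue_le (M : FinMDP S A) (hγ0 : 0 ≤ γ) {V W : S → ℝ} {E : ℝ}
    (h : ∀ s, |V s - W s| ≤ E) (s : S) (a : A) :
    |M.qValue γ V s a - M.qValue γ W s a| ≤ γ * E := by
  have havg : |∑ t, M.P s a t * (V t - W t)| ≤ E :=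
    abs_le.2 <| (convex_Icc (-E) E).sum_mem (fun t _ => M.P_nonneg s a t) (M.P_sum s a)
      fun t _ => abs_le.1 (h t)
  calc |M.qValue γ V s a - M.qValue γ W s a| = |γ * ∑ t, M.P s a t * (V t - W t)| := by
        simp only [FinMDP.qValue, mul_sub, Finset.sum_sub_distrib, add_sub_add_left_eq_sub]
    _ ≤ γ * E := by
        rw [abs_mul, abs_of_nonneg hγ0]
        exact mul_le_mul_of_nonneg_left havg hγ0

variable {M M₁ : FinMDP S A} {M₂ : FinMDP T B}

theorem abs_qValue_sub_qValue_le_gbsmDelta (hγ0 : 0 ≤ γ) {V : S → ℝ} {W : T → ℝ}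
    {d : S → T → ℝ} (h : ∀ s t, |V s - W t| ≤ d s t) (s : S) (a : A) (t : T) (b : B) :
    |M₁.qValue γ V s a - M₂.qValue γ W t b| ≤ gbsmDelta M₁ M₂ γ d s a t b := by
  have hW1 := abs_sum_mul_sub_sum_mul_le_W1 (M₁.P_mem_stdSimplex s a) (M₂.P_mem_stdSimplex t b) h
  rw [FinMDP.qValue, FinMDP.qValue, add_sub_add_comm, ← mul_sub]
  refine (abs_add_le _ _).trans (add_le_add_right ?_ _)
  rw [abs_mul, abs_of_nonneg hγ0]
  exact mul_le_mul_of_nonneg_left hW1 hγ0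

theorem abs_optimalValue_sub_le_gbsm [Nonempty A] [Nonempty B] (hγ0 : 0 ≤ γ) (hγ1 : γ < 1)
    {V : S → ℝ} {W : T → ℝ} (hV : M₁.IsOptimalValue γ V) (hW : M₂.IsOptimalValue γ W)
    (s : S) (t : T) : |V s - W t| ≤ gbsm M₁ M₂ γ s t := by
  refine le_gbsm_of_le_gbsmF (d := fun s t => |V s - W t|) hγ0 hγ1 (fun s t => ?_) s t
  calc |V s - W t| = |(⨆ a, M₁.qValue γ V s a) - ⨆ b, M₂.qValue γ W t b| := by rw [← hV, ← hW]
    _ ≤ gbsmF M₁ M₂ γ (fun s t => |V s - W t|) s t :=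
        abs_iSup_sub_iSup_le_hausdorffCost
          fun a b => abs_qValue_sub_qValue_le_gbsmDelta hγ0 (fun _ _ => le_rfl) s a t b

theorem FinMDP.IsPolicyValue.abs_sub_le_of_forall_abs_sub_qValue_le {π : S → A} {V W : S → ℝ}
    (hW : M.IsPolicyValue γ π W) (hγ0 : 0 ≤ γ) (hγ1 : γ < 1) {ε : ℝ}
    (h : ∀ s, |V s - M.qValue γ V s (π s)| ≤ ε) (s : S) : |V s - W s| ≤ ε / (1 - γ) := by
  have : Nonempty S := ⟨s⟩
  obtain ⟨s₀, hs₀⟩ := Finite.exists_max fun s => |V s - W s|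
  have hmax : |V s₀ - W s₀| ≤ ε + γ * |V s₀ - W s₀| :=
    calc |V s₀ - W s₀|
        ≤ |V s₀ - M.qValue γ V s₀ (π s₀)| + |M.qValue γ V s₀ (π s₀) - W s₀| := abs_sub_le _ _ _
      _ ≤ ε + γ * |V s₀ - W s₀| := by
          refine add_le_add (h s₀) ?_
          conv_lhs => rw [hW s₀]
          exact M.abs_qValue_sub_qValue_le hγ0 hs₀ s₀ (π s₀)
  refine (hs₀ s).trans ((le_div_iff₀ (sub_pos.2 hγ1)).2 ?_)
  linarith

theorem FinMDP.IsPolicyValue.abs_sub_qValue_le {π : S → A} {V W : S → ℝ}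
    (hW : M.IsPolicyValue γ π W) (hγ0 : 0 ≤ γ) {E : ℝ} (h : ∀ s, |V s - W s| ≤ E) (s : S) :
    |V s - M.qValue γ V s (π s)| ≤ (1 + γ) * E := by
  have hq := M.abs_qValue_sub_qValue_le hγ0 (fun s => abs_sub_comm (V s) (W s) ▸ h s) s (π s)
  calc |V s - M.qValue γ V s (π s)| ≤ |V s - W s| + |W s - M.qValue γ V s (π s)| :=
        abs_sub_le _ _ _
    _ ≤ E + γ * E := add_le_add (h s) (by rwa [← hW s] at hq)
    _ = (1 + γ) * E := by ring

end Values

section Transfer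

variable {S T A B : Type*} [Fintype S] [Fintype T] [Fintype A] [Fintype B] [Nonempty A]
  [Nonempty B] {M₁ : FinMDP S A} {M₂ : FinMDP T B} {γ : ℝ} {π : S → A} {V₁star V₁pi : S → ℝ}
  {V₂star V₂pi : T → ℝ}

theorem abs_optimalValue_sub_qValue_greedy_le (hγ0 : 0 ≤ γ) (hγ1 : γ < 1)
    (hV₁star : M₁.IsOptimalValue γ V₁star) (hV₂star : M₂.IsOptimalValue γ V₂star)
    {s : S} {a : A} {t : T} {b : B}
    (hb : gbsmDelta M₁ M₂ γ (gbsm M₁ M₂ γ) s a t b =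
      ⨅ b', gbsmDelta M₁ M₂ γ (gbsm M₁ M₂ γ) s a t b') :
    |V₂star t - M₂.qValue γ V₂star t b| ≤
      2 * gbsm M₁ M₂ γ s t + |V₁star s - M₁.qValue γ V₁star s a| := by
  have hV := abs_optimalValue_sub_le_gbsm hγ0 hγ1 hV₁star hV₂star
  have hq : |M₁.qValue γ V₁star s a - M₂.qValue γ V₂star t b| ≤ gbsm M₁ M₂ γ s t :=
    calc |M₁.qValue γ V₁star s a - M₂.qValue γ V₂star t b|
        ≤ gbsmDelta M₁ M₂ γ (gbsm M₁ M₂ γ) s a t b :=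
          abs_qValue_sub_qValue_le_gbsmDelta hγ0 hV s a t b
      _ ≤ gbsm M₁ M₂ γ s t := hb.trans_le (iInf_gbsmDelta_gbsm_le hγ0 hγ1 s a t)
  calc |V₂star t - M₂.qValue γ V₂star t b|
      ≤ |V₂star t - V₁star s| + |V₁star s - M₂.qValue γ V₂star t b| := abs_sub_le _ _ _
    _ ≤ |V₁star s - V₂star t| + (|V₁star s - M₁.qValue γ V₁star s a| +
          |M₁.qValue γ V₁star s a - M₂.qValue γ V₂star t b|) :=
        add_le_add (abs_sub_comm _ _).le (abs_sub_le _ _ _)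
    _ ≤ 2 * gbsm M₁ M₂ γ s t + |V₁star s - M₁.qValue γ V₁star s a| := by linarith [hV s t]

theorem policy_transfer_regret_bound_optimal_state_mapping_general [Nonempty T] (hγ0 : 0 ≤ γ)
    (hγ1 : γ < 1) {f : T → S} {σ : T → B}
    (hV₁star : M₁.IsOptimalValue γ V₁star) (hV₂star : M₂.IsOptimalValue γ V₂star)
    (hV₁pi : M₁.IsPolicyValue γ π V₁pi) (hV₂pi : M₂.IsPolicyValue γ σ V₂pi)
    (hσ : ∀ t, gbsmDelta M₁ M₂ γ (gbsm M₁ M₂ γ) (f t) (π (f t)) t (σ t) =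
      ⨅ b, gbsmDelta M₁ M₂ γ (gbsm M₁ M₂ γ) (f t) (π (f t)) t b) :
    (⨆ t, |V₂star t - V₂pi t|) ≤
      2 / (1 - γ) * (⨆ t, gbsm M₁ M₂ γ (f t) t) +
        (1 + γ) / (1 - γ) * ⨆ s, |V₁star s - V₁pi s| := by
  set D := ⨆ t, gbsm M₁ M₂ γ (f t) t
  set E := ⨆ s, |V₁star s - V₁pi s|
  have hstep (t : T) : |V₂star t - M₂.qValue γ V₂star t (σ t)| ≤ 2 * D + (1 + γ) * E := by
    have hD : gbsm M₁ M₂ γ (f t) t ≤ D :=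
      le_ciSup (f := fun t => gbsm M₁ M₂ γ (f t) t) (finite_range _).bddAbove t
    have hE : |V₁star (f t) - M₁.qValue γ V₁star (f t) (π (f t))| ≤ (1 + γ) * E :=
      hV₁pi.abs_sub_qValue_le hγ0 (le_ciSup (finite_range _).bddAbove) (f t)
    linarith [abs_optimalValue_sub_qValue_greedy_le hγ0 hγ1 hV₁star hV₂star (hσ t)]
  calc ⨆ t, |V₂star t - V₂pi t| ≤ (2 * D + (1 + γ) * E) / (1 - γ) :=
        ciSup_le (hV₂pi.abs_sub_le_of_forall_abs_sub_qValue_le hγ0 hγ1 hstep)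
    _ = 2 / (1 - γ) * D + (1 + γ) / (1 - γ) * E := by ring

end Transfer

/-- regret bound for policy transfer with greedy action mapping and
optimal state mapping. -/
theorem policy_transfer_regret_bound_optimal_state_mapping
    (M₁ : FinMDP S₁ A₁) (M₂ : FinMDP S₂ A₂) (γ Rbar : ℝ)
    (hγ0 : 0 ≤ γ) (hγ1 : γ < 1) (hRbar : 0 < Rbar)
    (hR₁ : ∀ s a, 0 ≤ M₁.R s a ∧ M₁.R s a ≤ Rbar)
    (hR₂ : ∀ s a, 0 ≤ M₂.R s a ∧ M₂.R s a ≤ Rbar)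
    (π : S₁ → A₁) (f : S₂ → S₁) (g : A₁ → A₂)
    (V₁star V₁pi : S₁ → ℝ) (V₂star V₂pi : S₂ → ℝ)
    (hV₁star : ∀ s, V₁star s = ⨆ a : A₁, (M₁.R s a + γ * ∑ t, M₁.P s a t * V₁star t))
    (hV₂star : ∀ s', V₂star s' = ⨆ a : A₂, (M₂.R s' a + γ * ∑ t, M₂.P s' a t * V₂star t))
    (hV₁pi : ∀ s, V₁pi s = M₁.R s (π s) + γ * ∑ t, M₁.P s (π s) t * V₁pi t)
    (hV₂pi : ∀ s', V₂pi s' =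
      M₂.R s' (g (π (f s'))) + γ * ∑ t, M₂.P s' (g (π (f s'))) t * V₂pi t)
    (hg : ∀ (s' : S₂) (a : A₁),
      gbsmDelta M₁ M₂ γ (gbsm M₁ M₂ γ) (f s') a s' (g a) =
        ⨅ a' : A₂, gbsmDelta M₁ M₂ γ (gbsm M₁ M₂ γ) (f s') a s' a')
    (hf : ∀ s' : S₂, gbsm M₁ M₂ γ (f s') s' = ⨅ s : S₁, gbsm M₁ M₂ γ s s') :
    (⨆ s' : S₂, |V₂star s' - V₂pi s'|) ≤
      2 / (1 - γ) * (⨆ s' : S₂, ⨅ s : S₁, gbsm M₁ M₂ γ s s') +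
        (1 + γ) / (1 - γ) * ⨆ s : S₁, |V₁star s - V₁pi s| := by
  simpa only [hf] using policy_transfer_regret_bound_optimal_state_mapping_general hγ0 hγ1
    hV₁star hV₂star hV₁pi hV₂pi fun s' => hg s' (π (f s'))

end
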